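/- For each clock x in a finite nonempty set X, introduce two CLTLoc clocks x₀, x₁ and an integer variable x_v, and let φ_clock := ⋀_{x∈X}(x₀ = 0 ∧ x₁ > 0 ∧ x_v = 0) ∧ G ⋀_{j∈{0,1}} ⋀_{x∈X}((x_j = 0) → X((x_{(j+1) mod 2} = 0) R ((x_v = j) ∧ (x_j > 0)))). Then in every interpretation (π, σ, ι) satisfying φ_clock, for every x ∈ X: (i) for every position i ∈ ℕ, it is not the case that both σ(i, x₀) = 0 and σ(i, x₁) = 0; and (ii) resets of x₀ and x₁ strictly alternate: if σ(i, x_j) = 0 and σ(i′, x_j) = 0 with i < i′ (for the same j ∈ {0,1}), then there exists i″ with i < i″ < i′ and σ(i″, x_{(j+1) mod 2}) = 0. Consequently, at every position at least one of the two clocks x₀, x₁ is not reset at the next position, so the delay δ_i of the clock assignment is uniquely determined as σ(i+1, x_j) − σ(i, x_j) for a non-reset copy. -/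

import Mathlib

open scoped NNReal

namespace TAMC

/-! ### CLTLoc with integer variables (CLTLoc_v). -/

/-- Comparison operators (with the derived `≤`, `≥`, `>` included). -/
inductive Cmp5 where
  | lt | le | eq | ge | gt
deriving DecidableEq

def Cmp5.holds {α : Type*} [Preorder α] : Cmp5 → α → α → Prop
  | .lt, a, b => a < b
  | .le, a, b => a ≤ b
  | .eq, a, b => a = b
  | .ge, a, b => b ≤ a
  | .gt, a, b => b < a

/-- Arithmetic terms over integer variables, allowing `X(n)` (the value of the
variable `n` at the next position). -/
inductive NTerm (V : Type) where
  | const (c : ℤ)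
  | var (v : V)
  | nextVar (v : V)
  | add (a b : NTerm V)
  | neg (a : NTerm V)
  | mul (a b : NTerm V)

def NTerm.eval {V : Type} (ι : ℕ → V → ℤ) (i : ℕ) : NTerm V → ℤ
  | .const c => c
  | .var v => ι i v
  | .nextVar v => ι (i + 1) v
  | .add a b => a.eval ι i + b.eval ι i
  | .neg a => - a.eval ι i
  | .mul a b => a.eval ι i * b.eval ι i

/-- CLTLoc_v formulas over atomic propositions `P`, clocks `C` and integer
variables `V`: propositions, clock atoms `x ∼ c`, arithmetic atoms and the
connectives `∧`, `¬`, `X`, `U`. -/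
inductive CLTLoc (P C V : Type) where
  | tt
  | prop (p : P)
  | clk (op : Cmp5) (x : C) (d : ℕ)
  | icmp (op : Cmp5) (a b : NTerm V)
  | and (f g : CLTLoc P C V)
  | not (f : CLTLoc P C V)
  | next (f : CLTLoc P C V)
  | untl (f g : CLTLoc P C V)

/-- A CLTLoc_v interpretation `(π, σ, ι)`: propositions `pr`, a clock assignment
`cl` with delays `del` (each clock either advances by the common delay or is
reset to `0`; time progresses, i.e. the delays sum to `∞`), and integer values
`iv`. -/
structure CLTLocInterp (P C V : Type) where
  pr : ℕ → Set P
  cl : ℕ → C → ℝ≥0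
  iv : ℕ → V → ℤ
  del : ℕ → ℝ≥0
  del_pos : ∀ i, 0 < del i
  cl_step : ∀ i x, cl (i + 1) x = cl i x + del i ∨ cl (i + 1) x = 0
  progress : Filter.Tendsto (fun n => ∑ i ∈ Finset.range n, del i)
      Filter.atTop Filter.atTop

/-- Satisfaction of a CLTLoc_v formula at a position. -/
def CLTLoc.sat {P C V : Type} (M : CLTLocInterp P C V) : ℕ → CLTLoc P C V → Prop
  | _, .tt => True
  | i, .prop p => p ∈ M.pr i
  | i, .clk op x d => op.holds (M.cl i x) (d : ℝ≥0)
  | i, .icmp op a b => op.holds (a.eval M.iv i) (b.eval M.iv i)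
  | i, .and f g => sat M i f ∧ sat M i g
  | i, .not f => ¬ sat M i f
  | i, .next f => sat M (i + 1) f
  | i, .untl f g => ∃ j, i ≤ j ∧ sat M j g ∧ ∀ m, i ≤ m → m < j → sat M m f

/-- `(π, σ, ι)` is a model of `f` when `f` holds at position `0`. -/
def CLTLoc.Models {P C V : Type} (M : CLTLocInterp P C V) (f : CLTLoc P C V) : Prop :=
  f.sat M 0

namespace CLTLoc

variable {P C V : Type}

def or (f g : CLTLoc P C V) : CLTLoc P C V := .not (.and (.not f) (.not g))
def imp (f g : CLTLoc P C V) : CLTLoc P C V := or (.not f) g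
def iff (f g : CLTLoc P C V) : CLTLoc P C V := .and (imp f g) (imp g f)
/-- The "eventually" modality `F`. -/
def ev (f : CLTLoc P C V) : CLTLoc P C V := .untl .tt f
/-- The "globally" modality `G`. -/
def alw (f : CLTLoc P C V) : CLTLoc P C V := .not (ev (.not f))
/-- The "release" modality `R`. -/
def release (f g : CLTLoc P C V) : CLTLoc P C V := .not (.untl (.not f) (.not g))
def bigAnd (l : List (CLTLoc P C V)) : CLTLoc P C V := l.foldr .and .tt
def bigOr (l : List (CLTLoc P C V)) : CLTLoc P C V := l.foldr or (.not .tt)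

end CLTLoc

/-! For each TA clock `x ∈ X` there are two CLTLoc clocks `(x, 0)` and `(x, 1)`
and an integer variable `x_v` (here the variable type is `X` itself, `x_v`
being the variable `x`). -/

/-- The other copy of a clock. -/
def flip2 : Fin 2 → Fin 2 := fun j => if j = 0 then 1 else 0

/-- The atom `x_v = j`. -/
def selEq {P X : Type} (x : X) (j : ℕ) : CLTLoc P (X × Fin 2) X :=
  .icmp .eq (.var x) (.const (j : ℤ))

/-- `φ_clock := ⋀_{x∈X}(x₀ = 0 ∧ x₁ > 0 ∧ x_v = 0) ∧
G ⋀_{j∈{0,1}} ⋀_{x∈X}((x_j = 0) → X((x_{(j+1) mod 2} = 0) R ((x_v = j) ∧ (x_j > 0))))`. -/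
noncomputable def phiClock (P X : Type) [Fintype X] : CLTLoc P (X × Fin 2) X :=
  .and
    (CLTLoc.bigAnd (((Finset.univ : Finset X)).toList.map fun x =>
      .and (.clk .eq (x, 0) 0) (.and (.clk .gt (x, 1) 0) (selEq x 0))))
    (CLTLoc.alw (CLTLoc.bigAnd ((List.finRange 2).flatMap fun j =>
      ((Finset.univ : Finset X)).toList.map fun x =>
        CLTLoc.imp (.clk .eq (x, j) 0)
          (.next (CLTLoc.release (.clk .eq (x, flip2 j) 0)
            (.and (selEq x j.val) (.clk .gt (x, j) 0)))))))

/-!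
The release operator in `φ_clock` forces a zero of the other copy of a clock strictly between any
two zeros of one copy. If both copies were zero at a position `b`, then any zero of a copy before
`b` would be followed by a zero of the other copy still before `b`, and so on forever, although
only finitely many positions precede `b`. Hence no copy would be zero before `b`; since `x₀` is
zero at position `0`, this forces `b = 0`, where `x₁ > 0`.
-/

/-- A family of events `p j` over a time domain `T` strictly alternates along `next` when any two
occurrences of `p j` are separated, strictly, by an occurrence of `p (next j)`. For resets of the
two copies of a clock, `next` is `flip2`. -/
def StrictlyAlternates {ι T : Type*} [Preorder T] (next : ι → ι) (p : ι → T → Prop) : Prop :=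
  ∀ (j : ι) (a b : T), a < b → p j a → p j b → ∃ c, a < c ∧ c < b ∧ p (next j) c

namespace StrictlyAlternates

variable {ι T : Type*} {next : ι → ι} {p : ι → T → Prop}

theorem not_of_forall_of_lt [Preorder T] [LocallyFiniteOrder T] (h : StrictlyAlternates next p)
    {b : T} (hb : ∀ j, p j b) {a : T} (hab : a < b) (j : ι) : ¬ p j a := by
  intro ha
  obtain ⟨c, hac, hcb, hc⟩ := h j a b hab ha (hb j)
  have : (Finset.Ioo c b).card < (Finset.Ioo a b).card :=
    Finset.card_lt_card <| (Finset.ssubset_iff_of_subset (Finset.Ioo_subset_Ioo_left hac.le)).2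
      ⟨c, Finset.mem_Ioo.2 ⟨hac, hcb⟩, Finset.left_notMem_Ioo⟩
  exact h.not_of_forall_of_lt hb hcb (next j) hc
termination_by (Finset.Ioo a b).card

theorem exists_not [PartialOrder T] [OrderBot T] [LocallyFiniteOrder T]
    (h : StrictlyAlternates next p) (hbot : ∃ j, p j ⊥) (hbot' : ∃ j, ¬ p j ⊥) (b : T) :
    ∃ j, ¬ p j b := by
  by_contra! hb
  obtain ⟨j, hj⟩ := hbot
  obtain rfl | hlt := eq_bot_or_bot_lt b
  · exact hbot'.elim fun j' hj' => hj' (hb j')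
  · exact h.not_of_forall_of_lt hb hlt j hj

end StrictlyAlternates

theorem CLTLocInterp.del_eq_tsub_of_ne_zero {P C V : Type} (M : CLTLocInterp P C V) {i : ℕ}
    {c : C} (hc : M.cl (i + 1) c ≠ 0) : M.del i = M.cl (i + 1) c - M.cl i c := by
  rw [(M.cl_step i c).resolve_right hc, add_tsub_cancel_left]

namespace CLTLoc

variable {P C V : Type} {M : CLTLocInterp P C V} {i : ℕ}

theorem sat_bigAnd {l : List (CLTLoc P C V)} : (bigAnd l).sat M i ↔ ∀ f ∈ l, f.sat M i := by
  induction l with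
  | nil => simp [bigAnd, sat]
  | cons f l ih => simpa [bigAnd, sat] using fun _ => ih

theorem sat_alw {f : CLTLoc P C V} : (alw f).sat M i ↔ ∀ k, i ≤ k → f.sat M k := by
  simp [alw, ev, sat]

theorem sat_imp {f g : CLTLoc P C V} : (imp f g).sat M i ↔ (f.sat M i → g.sat M i) := by
  simp [imp, or, sat]

theorem sat_release {f g : CLTLoc P C V} :
    (release f g).sat M i ↔ ∀ k, i ≤ k → g.sat M k ∨ ∃ m, i ≤ m ∧ m < k ∧ f.sat M m := by
  simp only [release, sat]
  grind

end CLTLoc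

section phiClock

variable {P X : Type} [Fintype X] {M : CLTLocInterp P (X × Fin 2) X}

theorem models_phiClock_iff :
    CLTLoc.Models M (phiClock P X) ↔
      (∀ x, M.cl 0 (x, 0) = 0 ∧ 0 < M.cl 0 (x, 1) ∧ M.iv 0 x = 0) ∧
      ∀ i j x, M.cl i (x, j) = 0 → ∀ k, i < k →
        (M.iv k x = j.val ∧ 0 < M.cl k (x, j)) ∨
          ∃ m, i < m ∧ m < k ∧ M.cl m (x, flip2 j) = 0 := by
  simp [CLTLoc.Models, phiClock, selEq, CLTLoc.sat, CLTLoc.sat_bigAnd, CLTLoc.sat_alw,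
    CLTLoc.sat_imp, CLTLoc.sat_release, Cmp5.holds, NTerm.eval, or_imp, forall_and]

theorem strictlyAlternates_flip2_of_models_phiClock (h : CLTLoc.Models M (phiClock P X)) (x : X) :
    StrictlyAlternates flip2 fun j i => M.cl i (x, j) = 0 :=
  fun j i k hik hi hk =>
    ((models_phiClock_iff.1 h).2 i j x hi k hik).resolve_left fun hpos => hpos.2.ne' hk

theorem exists_cl_ne_zero_of_models_phiClock (h : CLTLoc.Models M (phiClock P X)) (x : X) (i : ℕ) :
    ∃ j : Fin 2, M.cl i (x, j) ≠ 0 :=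
  have ⟨h₀, h₁, _⟩ := (models_phiClock_iff.1 h).1 x
  (strictlyAlternates_flip2_of_models_phiClock h x).exists_not ⟨0, h₀⟩ ⟨1, h₁.ne'⟩ i

end phiClock

/-- **Statement 11.** In every interpretation satisfying `φ_clock`, for every
`x ∈ X`: (i) the two copies `x₀`, `x₁` are never simultaneously `0`;
(ii) resets of `x₀` and `x₁` strictly alternate; consequently (iii) at every
position at least one copy is not reset at the next position and the delay
`δ_i` is uniquely determined as `σ(i+1, x_j) − σ(i, x_j)` for a non-reset copy. -/
theorem phiClock_spec {P X : Type} [Fintype X] [Nonempty X]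
    (M : CLTLocInterp P (X × Fin 2) X)
    (h : CLTLoc.Models M (phiClock P X)) (x : X) :
    (∀ i : ℕ, ¬ (M.cl i (x, 0) = 0 ∧ M.cl i (x, 1) = 0)) ∧
    (∀ (j : Fin 2) (i i' : ℕ), i < i' →
      M.cl i (x, j) = 0 → M.cl i' (x, j) = 0 →
      ∃ i'', i < i'' ∧ i'' < i' ∧ M.cl i'' (x, flip2 j) = 0) ∧
    (∀ i : ℕ, ∃ j : Fin 2, M.cl (i + 1) (x, j) ≠ 0 ∧
      M.del i = M.cl (i + 1) (x, j) - M.cl i (x, j)) := by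
  have hne := exists_cl_ne_zero_of_models_phiClock h x
  refine ⟨fun i => not_and_or.2 (Fin.exists_fin_two.1 (hne i)),
    strictlyAlternates_flip2_of_models_phiClock h x, fun i => ?_⟩
  obtain ⟨j, hj⟩ := hne (i + 1)
  exact ⟨j, hj, M.del_eq_tsub_of_ne_zero hj⟩

end TAMC
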